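/- arXiv:1905.03660 — 2 statements merged into one kernel-verified Lean document; each statement's English description precedes it below -/
import Mathlib

section
/- Let s ≥ 1, b_1,…,b_s ∈ ℝ with b_s > 0, and let κ, Δt, Δv, Δx > 0, tol ≥ 0, N_x ≥ 1, N_v ≥ 0, v_j ∈ ℝ (j = 0,…,N_v). For n = 0,…,N_t let f^n : ZMod N_x × {0,…,N_v} → ℝ, and suppose that for every n < N_t there exist data f*^n, f^{(k),n}, M^{(k),n} (k = 1,…,s−1) and M^{(s),n} on ZMod N_x × {0,…,N_v} such that: (i) Σ_{i,j} f*^n_{i,j}·φ_ℓ(v_j)·Δv·Δx = Σ_{i,j} f^n_{i,j}·φ_ℓ(v_j)·Δv·Δx for ℓ = 1,2,3; (ii) for every i and every ℓ ∈ {1,2,3}, |Σ_j (M^{(k),n}_{i,j} − f^{(k),n}_{i,j})·φ_ℓ(v_j)·Δv| ≤ tol for k = 1,…,s−1, and |Σ_j (M^{(s),n}_{i,j} − f*^n_{i,j})·φ_ℓ(v_j)·Δv| ≤ tol; (iii) f^{n+1}_{i,j} = f*^n_{i,j} + (Δt/κ)·[Σ_{k=1}^{s−1} b_k·(M^{(k),n}_{i,j}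 − f^{(k),n}_{i,j}) + b_s·(M^{(s),n}_{i,j} − f^{n+1}_{i,j})]. Then for every ℓ ∈ {1,2,3}: |Σ_{i,j} (f^{N_t}_{i,j} − f^0_{i,j})·φ_ℓ(v_j)·Δv·Δx| ≤ (Σ_{k=1}^{s−1} |b_k| + |b_s|)·(N_t·Δt/(κ + b_s·Δt))·(N_x·Δx)·tol. -/
open Finset

/-- The 1D collision invariants: `φ_1(v) = 1`, `φ_2(v) = v`, `φ_3(v) = v²/2`. -/
noncomputable def phi : Fin 3 → ℝ → ℝ := ![fun _ => 1, fun w => w, fun w => w ^ 2 / 2]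

/-!
Solving the implicit update `f' = f* + (Δt/κ) (r + β (M - f'))` for `f' - f*` gives
`(Δt/(κ + β Δt)) (r + β (M - f*))`: both terms on the right have moments controlled by the
tolerance, so each cell moment changes by at most a fixed amount from `f*` to `f'`. Since `f*` has
the same total moments as the previous time level, summing over cells and telescoping in time
gives the estimate.
-/

section ImplicitUpdate

variable {𝕜 E G ι : Type*}

theorem sub_eq_smul_of_implicit_update [Field 𝕜] [AddCommGroup E] [Module 𝕜 E]
    {κ τ β : 𝕜} (hκ : κ ≠ 0) (hden : κ + β * τ ≠ 0) {f' fstar r M : E}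
    (h : f' = fstar + (τ / κ) • (r + β • (M - f'))) :
    f' - fstar = (τ / (κ + β * τ)) • (r + β • (M - fstar)) := by
  have hscaled : κ • (f' - fstar) = τ • (r + β • (M - f')) := by
    rw [sub_eq_of_eq_add' h, smul_smul, mul_div_cancel₀ τ hκ]
  have hsolved : (κ + β * τ) • (f' - fstar) = τ • (r + β • (M - fstar)) := by
    rw [add_smul, hscaled]
    module
  rw [div_eq_inv_mul, mul_smul, ← hsolved, inv_smul_smul₀ hden]

variable [NormedField 𝕜] [SeminormedAddCommGroup G] [NormedSpace 𝕜 G]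

theorem norm_sum_smul_add_smul_le {T : Finset ι} {b : ι → 𝕜} {β : 𝕜} {d : ι → G} {e : G}
    {tol : ℝ} (hd : ∀ k ∈ T, ‖d k‖ ≤ tol) (he : ‖e‖ ≤ tol) :
    ‖∑ k ∈ T, b k • d k + β • e‖ ≤ (∑ k ∈ T, ‖b k‖ + ‖β‖) * tol := by
  rw [add_mul, sum_mul]
  refine norm_add_le_of_le (norm_sum_le_of_le T fun k hk ↦ ?_) ?_
  · rw [norm_smul]
    exact mul_le_mul_of_nonneg_left (hd k hk) (norm_nonneg _)
  · rw [norm_smul]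
    exact mul_le_mul_of_nonneg_left he (norm_nonneg _)

variable [AddCommGroup E] [Module 𝕜 E] {X : Type*} [Fintype X]
  {m : E →ₗ[𝕜] G} {T : Finset ι} {b : ι → 𝕜} {κ τ β : 𝕜} {tol : ℝ}

theorem norm_map_sub_le_of_implicit_update (hκ : κ ≠ 0) (hden : κ + β * τ ≠ 0)
    {f' fstar M : E} {d : ι → E}
    (hd : ∀ k ∈ T, ‖m (d k)‖ ≤ tol) (hM : ‖m (M - fstar)‖ ≤ tol)
    (h : f' = fstar + (τ / κ) • (∑ k ∈ T, b k • d k + β • (M - f'))) :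
    ‖m (f' - fstar)‖ ≤ ‖τ / (κ + β * τ)‖ * ((∑ k ∈ T, ‖b k‖ + ‖β‖) * tol) := by
  rw [sub_eq_smul_of_implicit_update hκ hden h, map_smul, map_add, map_sum, map_smul,
    norm_smul]
  simp only [map_smul]
  exact mul_le_mul_of_nonneg_left (norm_sum_smul_add_smul_le hd hM) (norm_nonneg _)

theorem norm_sum_map_sub_le_of_implicit_update (hκ : κ ≠ 0) (hden : κ + β * τ ≠ 0)
    {f f' fstar M : X → E} {d : ι → X → E}
    (hcons : ∑ i, m (fstar i) = ∑ i, m (f i))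
    (hd : ∀ i, ∀ k ∈ T, ‖m (d k i)‖ ≤ tol) (hM : ∀ i, ‖m (M i - fstar i)‖ ≤ tol)
    (h : ∀ i, f' i = fstar i + (τ / κ) • (∑ k ∈ T, b k • d k i + β • (M i - f' i))) :
    ‖∑ i, m (f' i) - ∑ i, m (f i)‖ ≤
      Fintype.card X * (‖τ / (κ + β * τ)‖ * ((∑ k ∈ T, ‖b k‖ + ‖β‖) * tol)) := by
  rw [← hcons, ← sum_sub_distrib, ← nsmul_eq_mul, ← card_univ, ← sum_const]
  refine norm_sum_le_of_le univ fun i _ ↦ ?_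
  rw [← map_sub]
  exact norm_map_sub_le_of_implicit_update hκ hden (hd i) (hM i) (h i)

end ImplicitUpdate

theorem norm_sub_le_mul_of_norm_succ_sub_le {G : Type*} [SeminormedAddCommGroup G] {F : ℕ → G}
    {N : ℕ} {C : ℝ} (h : ∀ n < N, ‖F (n + 1) - F n‖ ≤ C) : ‖F N - F 0‖ ≤ N * C := by
  have htelescope : dist (F 0) (F N) ≤ ∑ _n ∈ range N, C :=
    dist_le_range_sum_of_dist_le N fun {n} hn ↦ by
      rw [dist_comm, dist_eq_norm]
      exact h n hn
  rwa [dist_comm, dist_eq_norm, sum_const, card_range, nsmul_eq_mul] at htelescope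

section CellMoment

variable {V : Type*} [Fintype V]

/-- The contribution of one spatial cell of width `Δx` to the discrete total moment with velocity
weight `ψ`, as a linear functional of the velocity profile in that cell. The factor `Δx` is included
so that the total moment is a plain sum over cells. -/
noncomputable def cellMoment (ψ : V → ℝ) (Δv Δx : ℝ) : (V → ℝ) →ₗ[ℝ] ℝ :=
  Fintype.linearCombination ℝ fun j ↦ ψ j * Δv * Δx

theorem cellMoment_apply (ψ : V → ℝ) (Δv Δx : ℝ) (g : V → ℝ) :
    cellMoment ψ Δv Δx g = ∑ j, g j * ψ j * Δv * Δx := by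
  simp only [cellMoment, Fintype.linearCombination_apply, smul_eq_mul, mul_assoc]

theorem norm_cellMoment_le {ψ : V → ℝ} {Δv Δx tol : ℝ} (hΔx : 0 ≤ Δx) {g : V → ℝ}
    (hg : |∑ j, g j * ψ j * Δv| ≤ tol) : ‖cellMoment ψ Δv Δx g‖ ≤ tol * Δx := by
  rw [cellMoment_apply, ← sum_mul, Real.norm_eq_abs, abs_mul, abs_of_nonneg hΔx]
  exact mul_le_mul_of_nonneg_right hg hΔx

end CellMoment

theorem stmt_4_general {X V ι : Type*} [Fintype X] [Fintype V] (T : Finset ι) (b : ι → ℝ)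
    (β κ Δt Δv Δx tol : ℝ) (hκ : κ ≠ 0) (hΔt : 0 ≤ Δt) (hden : 0 < κ + β * Δt) (hΔx : 0 ≤ Δx)
    (ψ : V → ℝ) (Nt : ℕ) (f : ℕ → X → V → ℝ)
    (hstep : ∀ n < Nt, ∃ (fstar : X → V → ℝ) (fstage Mstage : ι → X → V → ℝ) (Ms : X → V → ℝ),
      (∑ i, ∑ j, fstar i j * ψ j * Δv * Δx = ∑ i, ∑ j, f n i j * ψ j * Δv * Δx) ∧
      (∀ i, ∀ k ∈ T, |∑ j, (Mstage k i j - fstage k i j) * ψ j * Δv| ≤ tol) ∧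
      (∀ i, |∑ j, (Ms i j - fstar i j) * ψ j * Δv| ≤ tol) ∧
      (∀ i j, f (n + 1) i j = fstar i j + (Δt / κ) *
        ((∑ k ∈ T, b k * (Mstage k i j - fstage k i j)) + β * (Ms i j - f (n + 1) i j)))) :
    |∑ i, ∑ j, (f Nt i j - f 0 i j) * ψ j * Δv * Δx| ≤
      ((∑ k ∈ T, |b k|) + |β|) * (Nt * Δt / (κ + β * Δt)) * (Fintype.card X * Δx) * tol := by
  have hincrement : ∀ n < Nt,
      ‖∑ i, cellMoment ψ Δv Δx (f (n + 1) i) - ∑ i, cellMoment ψ Δv Δx (f n i)‖ ≤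
        Fintype.card X * (‖Δt / (κ + β * Δt)‖ * ((∑ k ∈ T, ‖b k‖ + ‖β‖) * (tol * Δx))) := by
    intro n hn
    obtain ⟨fstar, fstage, Mstage, Ms, hcons, hstage, hlast, hupdate⟩ := hstep n hn
    refine norm_sum_map_sub_le_of_implicit_update hκ hden.ne' (d := Mstage - fstage) ?_
      (fun i k hk ↦ norm_cellMoment_le hΔx (hstage i k hk))
      (fun i ↦ norm_cellMoment_le hΔx (hlast i)) fun i ↦ funext fun j ↦ ?_
    · simpa only [cellMoment_apply] using hcons
    · simpa [-smul_add] using hupdate i j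
  calc |∑ i, ∑ j, (f Nt i j - f 0 i j) * ψ j * Δv * Δx|
      = ‖∑ i, cellMoment ψ Δv Δx (f Nt i) - ∑ i, cellMoment ψ Δv Δx (f 0 i)‖ := by
        simp only [cellMoment_apply, sub_mul, sum_sub_distrib, Real.norm_eq_abs]
    _ ≤ Nt * (Fintype.card X *
          (‖Δt / (κ + β * Δt)‖ * ((∑ k ∈ T, ‖b k‖ + ‖β‖) * (tol * Δx)))) :=
        norm_sub_le_mul_of_norm_succ_sub_le
          (F := fun n ↦ ∑ i, cellMoment ψ Δv Δx (f n i)) hincrement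
    _ = _ := by
        rw [Real.norm_of_nonneg (div_nonneg hΔt hden.le)]
        simp only [Real.norm_eq_abs]
        ring

theorem stmt_4 (s : ℕ) (hs : 1 ≤ s) (b : ℕ → ℝ) (hbs : 0 < b s)
    (κ Δt Δv Δx tol : ℝ) (hκ : 0 < κ) (hΔt : 0 < Δt) (hΔv : 0 < Δv) (hΔx : 0 < Δx)
    (htol : 0 ≤ tol)
    (Nx Nv Nt : ℕ) [NeZero Nx] (v : Fin (Nv + 1) → ℝ)
    (f : ℕ → ZMod Nx → Fin (Nv + 1) → ℝ)
    (hstep : ∀ n < Nt,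
      ∃ (fstar : ZMod Nx → Fin (Nv + 1) → ℝ)
        (fstage Mstage : ℕ → ZMod Nx → Fin (Nv + 1) → ℝ)
        (Ms : ZMod Nx → Fin (Nv + 1) → ℝ),
        (∀ l : Fin 3,
          ∑ i : ZMod Nx, ∑ j : Fin (Nv + 1), fstar i j * phi l (v j) * Δv * Δx
            = ∑ i : ZMod Nx, ∑ j : Fin (Nv + 1), f n i j * phi l (v j) * Δv * Δx) ∧
        (∀ (i : ZMod Nx) (l : Fin 3), ∀ k ∈ Finset.Ico 1 s,
          |∑ j : Fin (Nv + 1), (Mstage k i j - fstage k i j) * phi l (v j) * Δv| ≤ tol) ∧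
        (∀ (i : ZMod Nx) (l : Fin 3),
          |∑ j : Fin (Nv + 1), (Ms i j - fstar i j) * phi l (v j) * Δv| ≤ tol) ∧
        (∀ (i : ZMod Nx) (j : Fin (Nv + 1)),
          f (n + 1) i j = fstar i j + (Δt / κ) *
            ((∑ k ∈ Finset.Ico 1 s, b k * (Mstage k i j - fstage k i j))
              + b s * (Ms i j - f (n + 1) i j)))) :
    ∀ l : Fin 3,
      |∑ i : ZMod Nx, ∑ j : Fin (Nv + 1), (f Nt i j - f 0 i j) * phi l (v j) * Δv * Δx|
        ≤ ((∑ k ∈ Finset.Ico 1 s, |b k|) + |b s|) * (Nt * Δt / (κ + b s * Δt))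
            * ((Nx : ℝ) * Δx) * tol := by
  intro l
  simpa only [ZMod.card] using stmt_4_general (Ico 1 s) b (b s) κ Δt Δv Δx tol hκ.ne' hΔt.le
    (by positivity) hΔx.le (fun j ↦ phi l (v j)) Nt f fun n hn ↦
      let ⟨fstar, fstage, Mstage, Ms, hcons, hstage, hlast, hupdate⟩ := hstep n hn
      ⟨fstar, fstage, Mstage, Ms, hcons l, fun i ↦ hstage i l, fun i ↦ hlast i l, hupdate⟩
end

section
/- Let Δx, Δt > 0, v ∈ ℝ, and set a = v·Δt/Δx. Let ξ ∈ (−π, π), let s ≥ 1 and b, c : Fin s → ℝ. Define sinc(t) = sin(t)/t for t ≠ 0 and sinc(0) = 1, and for each ℓ define Ĝ_ℓ : ℝ → ℂ by Ĝ_ℓ(x) = exp(i·ξ·x/Δx)·exp(−i·c_ℓ·a·ξ)/sinc(ξ/2). Then for every j ∈ ℤ, with x_j = j·Δx and u_j = exp(i·j·ξ): u_j − (Δt/Δx)·Σ_ℓ b_ℓ·v·(Ĝ_ℓ(x_j + Δx/2) − Ĝ_ℓ(x_j − Δx/2)) = ρ(ξ)·u_j, where ρ(ξ) = 1 − i·ξ·a·Σ_ℓ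 b_ℓ·exp(−i·c_ℓ·a·ξ). -/
open Finset Complex

/-- The unnormalized sinc function: `sinc t = sin t / t` for `t ≠ 0`, `sinc 0 = 1`. -/
noncomputable def sinc (t : ℝ) : ℝ := if t = 0 then 1 else Real.sin t / t

/-!
Since `exp (it) - exp (-it) = 2i sin t = 2i t sinc t`, dividing by `sinc (ξ / 2)` makes the central
difference of a Fourier mode over one cell reproduce its exact derivative, multiplication by `iξ`.
Each stage therefore contributes `iξ` times its own phase shift, and the common factor
`v Δt / Δx = a` comes out of the weighted sum.
-/

theorem mul_sinc (t : ℝ) : t * sinc t = Real.sin t := by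
  rcases eq_or_ne t 0 with rfl | ht
  · simp
  · rw [sinc, if_neg ht, mul_div_cancel₀ _ ht]

theorem sinc_ne_zero_of_mem_Ioo {t : ℝ} (ht : t ∈ Set.Ioo (-Real.pi) Real.pi) : sinc t ≠ 0 := by
  rcases eq_or_ne t 0 with rfl | ht₀
  · simp [sinc]
  · have hsin : Real.sin t ≠ 0 := mt (Real.sin_eq_zero_iff_of_lt_of_lt ht.1 ht.2).mp ht₀
    exact right_ne_zero_of_mul (mul_sinc t ▸ hsin)

theorem exp_I_mul_sub_exp_neg_I_mul (t : ℝ) :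
    exp (I * t) - exp (-(I * t)) = 2 * I * t * sinc t := by
  calc exp (I * t) - exp (-(I * t))
      = 2 * I * sin t := by
        rw [mul_comm I (t : ℂ), ← neg_mul, exp_mul_I, exp_mul_I, cos_neg, sin_neg]
        ring
    _ = 2 * I * t * sinc t := by
        rw [← ofReal_sin, ← mul_sinc t, ofReal_mul]
        ring

theorem central_difference_exp_div_sinc {ξ : ℝ} (hξ : sinc (ξ / 2) ≠ 0) (θ : ℝ) :
    (exp (I * ((θ + ξ / 2 : ℝ) : ℂ)) - exp (I * ((θ - ξ / 2 : ℝ) : ℂ))) / (sinc (ξ / 2) : ℂ)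
      = I * ξ * exp (I * θ) := by
  have hsinc : (sinc (ξ / 2) : ℂ) ≠ 0 := ofReal_ne_zero.mpr hξ
  rw [div_eq_iff hsinc]
  calc exp (I * ((θ + ξ / 2 : ℝ) : ℂ)) - exp (I * ((θ - ξ / 2 : ℝ) : ℂ))
      = exp (I * θ) * (exp (I * ((ξ / 2 : ℝ) : ℂ)) - exp (-(I * ((ξ / 2 : ℝ) : ℂ)))) := by
        rw [ofReal_add, ofReal_sub, mul_add, mul_sub, sub_eq_add_neg (I * _), exp_add, exp_add,
          mul_sub]
    _ = I * ξ * exp (I * θ) * sinc (ξ / 2) := by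
        rw [exp_I_mul_sub_exp_neg_I_mul]
        push_cast
        ring

theorem reconstructed_flux_difference {Δx ξ : ℝ} (hΔx : Δx ≠ 0) (hξ : sinc (ξ / 2) ≠ 0)
    (z : ℂ) (y : ℝ) :
    exp (I * ((ξ * (y * Δx + Δx / 2) / Δx : ℝ) : ℂ)) * z / (sinc (ξ / 2) : ℂ)
        - exp (I * ((ξ * (y * Δx - Δx / 2) / Δx : ℝ) : ℂ)) * z / (sinc (ξ / 2) : ℂ)
      = I * ξ * z * exp (I * ((y * ξ : ℝ) : ℂ)) := by
  have hright : ξ * (y * Δx + Δx / 2) / Δx = y * ξ + ξ / 2 := by field_simp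
  have hleft : ξ * (y * Δx - Δx / 2) / Δx = y * ξ - ξ / 2 := by field_simp
  rw [hright, hleft]
  linear_combination z * central_difference_exp_div_sinc hξ (y * ξ)

theorem stmt_16_general {ι : Type*} [Fintype ι] {Δx Δt v a ξ : ℝ} (hΔx : Δx ≠ 0)
    (ha : a = v * Δt / Δx) (hξ : sinc (ξ / 2) ≠ 0) {b c : ι → ℝ} {G : ι → ℝ → ℂ}
    (hG : ∀ (ℓ : ι) (x : ℝ),
      G ℓ x = exp (I * ((ξ * x / Δx : ℝ) : ℂ)) * exp (-(I * ((c ℓ * a * ξ : ℝ) : ℂ)))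
        / (sinc (ξ / 2) : ℂ))
    {ρ : ℂ} (hρ : ρ = 1 - I * ξ * a * ∑ ℓ, (b ℓ : ℂ) * exp (-(I * ((c ℓ * a * ξ : ℝ) : ℂ))))
    (y : ℝ) :
    exp (I * ((y * ξ : ℝ) : ℂ))
        - ((Δt / Δx : ℝ) : ℂ) *
          ∑ ℓ, (b ℓ : ℂ) * v * (G ℓ (y * Δx + Δx / 2) - G ℓ (y * Δx - Δx / 2))
      = ρ * exp (I * ((y * ξ : ℝ) : ℂ)) := by
  have hcfl : (a : ℂ) = v * ((Δt / Δx : ℝ) : ℂ) := by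
    rw [ha, mul_div_assoc, ofReal_mul]
  have hstage (ℓ : ι) : (b ℓ : ℂ) * v * (G ℓ (y * Δx + Δx / 2) - G ℓ (y * Δx - Δx / 2))
      = I * ξ * v * exp (I * ((y * ξ : ℝ) : ℂ))
        * ((b ℓ : ℂ) * exp (-(I * ((c ℓ * a * ξ : ℝ) : ℂ)))) := by
    rw [hG, hG, reconstructed_flux_difference hΔx hξ]
    ring
  simp only [hstage, ← mul_sum, hρ]
  linear_combination (I * ξ * exp (I * ((y * ξ : ℝ) : ℂ))
    * ∑ ℓ, (b ℓ : ℂ) * exp (-(I * ((c ℓ * a * ξ : ℝ) : ℂ)))) * hcfl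

theorem stmt_16 (Δx Δt v : ℝ) (hΔx : 0 < Δx) (hΔt : 0 < Δt)
    (a : ℝ) (ha : a = v * Δt / Δx)
    (ξ : ℝ) (hξ : ξ ∈ Set.Ioo (-Real.pi) Real.pi)
    (s : ℕ) (hs : 1 ≤ s) (b c : Fin s → ℝ)
    (G : Fin s → ℝ → ℂ)
    (hG : ∀ (ℓ : Fin s) (x : ℝ),
      G ℓ x = Complex.exp (Complex.I * ((ξ * x / Δx : ℝ) : ℂ))
          * Complex.exp (-(Complex.I * ((c ℓ * a * ξ : ℝ) : ℂ)))
          / ((sinc (ξ / 2) : ℝ) : ℂ))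
    (ρ : ℂ)
    (hρ : ρ = 1 - Complex.I * (ξ : ℂ) * (a : ℂ) *
        ∑ ℓ : Fin s, (b ℓ : ℂ) * Complex.exp (-(Complex.I * ((c ℓ * a * ξ : ℝ) : ℂ)))) :
    ∀ j : ℤ,
      Complex.exp (Complex.I * (((j : ℝ) * ξ : ℝ) : ℂ))
        - ((Δt / Δx : ℝ) : ℂ) *
            ∑ ℓ : Fin s, (b ℓ : ℂ) * (v : ℂ) *
              (G ℓ ((j : ℝ) * Δx + Δx / 2) - G ℓ ((j : ℝ) * Δx - Δx / 2))
        = ρ * Complex.exp (Complex.I * (((j : ℝ) * ξ : ℝ) : ℂ)) := by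
  have hhalf : ξ / 2 ∈ Set.Ioo (-Real.pi) Real.pi :=
    ⟨by linarith [hξ.1, Real.pi_pos], by linarith [hξ.2, Real.pi_pos]⟩
  exact fun j => stmt_16_general hΔx.ne' ha (sinc_ne_zero_of_mem_Ioo hhalf) hG hρ j
end
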